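/- Assume ζ₀ := ū^{in}/u_s > 1, let (u₀, E₀) ∈ T_acc with 0 < u₀ < u_s, and let (ū₁, Ē) : [0, l_max] → ℝ² be a smooth solution of the system (ū₁^{γ+1} − u_s^{γ+1})·ū₁' = Ē·ū₁^γ, Ē' = J/ū₁ − ρ̄^{in} with (ū₁, Ē)(0) = (u₀, E₀), ū₁ > 0, and ū₁' > 0 on [0, l_max). Define φ̄(x₁) := ∫₀^{x₁} ū₁(t) dt. Then φ̄ is smooth on [0, l_max] and satisfies, for all x₁ ∈ [0, l_max], the second-order degenerate equation ((φ̄'(x₁))^{γ+1} − u_s^{γ+1})·φ̄''(x₁) − sgn(φ̄'(x₁) − u_s)·√(2H(φ̄'(x₁)))·(φ̄'(x₁))^γ = 0, where sgn(s) = 1 for s > 0, sgn(s) = −1 for s < 0, and sgn(0) = 0. -/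

import Mathlib

open Set Filter intervalIntegral

/-- The sonic speed `u_s = (γ S₀ J^{γ−1})^{1/(γ+1)}`. -/
noncomputable def usonic (γ S₀ J : ℝ) : ℝ :=
  (γ * S₀ * J ^ (γ - 1)) ^ (1 / (γ + 1))

/-- `ū^{in} = J / ρ̄^{in}`. -/
noncomputable def uIn (ρin J : ℝ) : ℝ := J / ρin

/-- `H(u) = (J/ū^{in}) ∫_{u_s}^{u} t^{−(γ+1)} (t^{γ+1} − u_s^{γ+1})(ū^{in} − t) dt`. -/
noncomputable def Hfun (γ ρin S₀ J : ℝ) (u : ℝ) : ℝ :=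
  (J / uIn ρin J) *
    ∫ t in usonic γ S₀ J..u,
      t ^ (-(γ + 1)) * ((t ^ (γ + 1) - usonic γ S₀ J ^ (γ + 1)) * (uIn ρin J - t))

/-- The critical trajectory `T = {(u,E) ∈ (0,∞) × ℝ : ½E² − H(u) = 0}`. -/
def critTraj (γ ρin S₀ J : ℝ) : Set (ℝ × ℝ) :=
  {p | 0 < p.1 ∧ p.2 ^ 2 / 2 - Hfun γ ρin S₀ J p.1 = 0}

/-- The critical trajectory with acceleration. -/
def critTrajAcc (γ ρin S₀ J : ℝ) : Set (ℝ × ℝ) :=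
  {p ∈ critTraj γ ρin S₀ J | 0 ≤ (p.1 - usonic γ S₀ J) * p.2}

/-- The critical trajectory with deceleration. -/
def critTrajDec (γ ρin S₀ J : ℝ) : Set (ℝ × ℝ) :=
  {p ∈ critTraj γ ρin S₀ J | (p.1 - usonic γ S₀ J) * p.2 ≤ 0}

/- The system makes `E² / 2 - H(u)` a first integral: since
`H'(u) = (u^(γ+1) - u_s^(γ+1)) u^(-γ) (J/u - ρ̄^{in})`, the momentum equation turns `H'(u) u'` into
`E (J/u - ρ̄^{in}) = E E'`. So a solution that starts on the critical trajectory `T` stays on it,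
i.e. `E² = 2 H(u)`. If `u` is nondecreasing, the momentum equation forces `E` to have the sign of
`u - u_s`, so the solution stays on the accelerating branch, where `E = sgn(u - u_s) √(2 H(u))`.
Substituting this and `u = φ'` into the momentum equation eliminates `E`. -/

section IccCalculus

variable {a b : ℝ}

theorem hasDerivWithinAt_integral_Icc {F : Type*} [NormedAddCommGroup F] [NormedSpace ℝ F]
    [CompleteSpace F] {f : ℝ → F} (hf : ContinuousOn f (Icc a b)) {x : ℝ} (hx : x ∈ Icc a b) :
    HasDerivWithinAt (fun y => ∫ t in a..y, f t) (f x) (Icc a b) x := by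
  have : Fact (x ∈ Icc a b) := ⟨hx⟩
  have hint : IntervalIntegrable f MeasureTheory.volume a x :=
    (hf.mono (Icc_subset_Icc_right hx.2)).intervalIntegrable_of_Icc hx.1
  exact integral_hasDerivWithinAt_right hint
    (hf.stronglyMeasurableAtFilter_nhdsWithin measurableSet_Icc x) (hf x hx)

theorem contDiffOn_succ_of_hasDerivWithinAt {𝕜 F : Type*} [NontriviallyNormedField 𝕜]
    [NormedAddCommGroup F] [NormedSpace 𝕜 F] {s : Set 𝕜} {n : ℕ∞} {f f' : 𝕜 → F}
    (hs : UniqueDiffOn 𝕜 s) (hf : ∀ x ∈ s, HasDerivWithinAt f (f' x) s x)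
    (hf' : ContDiffOn 𝕜 n f' s) : ContDiffOn 𝕜 (n + 1) f s :=
  (contDiffOn_succ_iff_derivWithin hs).2
    ⟨fun x hx => (hf x hx).differentiableWithinAt, by simp,
      hf'.congr fun x hx => (hf x hx).derivWithin (hs x hx)⟩

theorem monotoneOn_Icc_of_derivWithin_nonneg {f : ℝ → ℝ} (hf : DifferentiableOn ℝ f (Icc a b))
    (hf' : ∀ x ∈ Ioo a b, 0 ≤ derivWithin f (Icc a b) x) : MonotoneOn f (Icc a b) := by
  refine monotoneOn_of_deriv_nonneg (convex_Icc a b) hf.continuousOn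
    (hf.mono interior_subset) fun x hx => ?_
  rw [interior_Icc] at hx
  rw [← derivWithin_of_mem_nhds (Icc_mem_nhds hx.1 hx.2)]
  exact hf' x hx

end IccCalculus

variable {γ ρin S₀ J : ℝ}

theorem usonic_pos (hγ : 0 < γ) (hS₀ : 0 < S₀) (hJ : 0 < J) : 0 < usonic γ S₀ J := by
  unfold usonic
  positivity

theorem Hfun_usonic : Hfun γ ρin S₀ J (usonic γ S₀ J) = 0 := by
  simp [Hfun]

theorem hasDerivAt_Hfun (hγ : 0 < γ) (hρin : ρin ≠ 0) (hS₀ : 0 < S₀) (hJ : 0 < J)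
    {v : ℝ} (hv : 0 < v) :
    HasDerivAt (Hfun γ ρin S₀ J)
      ((v ^ (γ + 1) - usonic γ S₀ J ^ (γ + 1)) / v ^ γ * (J / v - ρin)) v := by
  set us := usonic γ S₀ J
  set h : ℝ → ℝ := fun t => t ^ (-(γ + 1)) * ((t ^ (γ + 1) - us ^ (γ + 1)) * (uIn ρin J - t))
  have h_cont : ContinuousOn h (Ioi 0) := fun t ht => by
    have hpow (r : ℝ) : ContinuousAt (fun t : ℝ => t ^ r) t :=
      Real.continuousAt_rpow_const t r (Or.inl (ne_of_gt ht))
    exact ((hpow _).mul (((hpow _).sub continuousAt_const).mul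
      (continuousAt_const.sub continuousAt_id))).continuousWithinAt
  have h_int : IntervalIntegrable h MeasureTheory.volume us v :=
    (h_cont.mono fun t ht =>
      (lt_min (usonic_pos hγ hS₀ hJ) hv).trans_le ht.1).intervalIntegrable
  have h_deriv : HasDerivAt (fun w => J / uIn ρin J * ∫ t in us..w, h t)
      (J / uIn ρin J * h v) v :=
    (integral_hasDerivAt_right h_int (h_cont.stronglyMeasurableAtFilter isOpen_Ioi v hv)
      (h_cont.continuousAt (Ioi_mem_nhds hv))).const_mul _
  refine h_deriv.congr_deriv ?_
  have hpow : v ^ (-(γ + 1)) = (v ^ γ)⁻¹ * v⁻¹ := by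
    rw [Real.rpow_neg hv.le, Real.rpow_add_one hv.ne', mul_inv]
  simp only [h, hpow, uIn]
  field_simp

theorem sign_mul_sqrt_of_mem_critTrajAcc {v e : ℝ} (h : (v, e) ∈ critTrajAcc γ ρin S₀ J) :
    Real.sign (v - usonic γ S₀ J) * √(2 * Hfun γ ρin S₀ J v) = e := by
  obtain ⟨⟨-, h_energy⟩, h_acc⟩ := h
  dsimp only at h_energy h_acc
  rw [show 2 * Hfun γ ρin S₀ J v = e ^ 2 by linarith, Real.sqrt_sq_eq_abs]
  rcases lt_trichotomy v (usonic γ S₀ J) with hlt | rfl | hgt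
  · have he : e ≤ 0 := nonpos_of_mul_nonneg_right h_acc (sub_neg.2 hlt)
    rw [Real.sign_of_neg (sub_neg.2 hlt), abs_of_nonpos he, neg_one_mul, neg_neg]
  · have he : e = 0 := by simpa [Hfun_usonic] using h_energy
    simp [he]
  · have he : 0 ≤ e := (mul_nonneg_iff_of_pos_left (sub_pos.2 hgt)).1 h_acc
    rw [Real.sign_of_pos (sub_pos.2 hgt), abs_of_nonneg he, one_mul]

/-- One-dimensional steady Euler–Poisson flow on `s`, in terms of the velocity `u` and the electric
field `E`. Derivatives are taken within `s`, hence are one-sided at the endpoints of an interval. -/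
structure IsSteadyFlowOn (γ ρin S₀ J : ℝ) (u E : ℝ → ℝ) (s : Set ℝ) : Prop where
  differentiableOn_velocity : DifferentiableOn ℝ u s
  differentiableOn_field : DifferentiableOn ℝ E s
  velocity_pos : ∀ x ∈ s, 0 < u x
  momentum : ∀ x ∈ s,
    (u x ^ (γ + 1) - usonic γ S₀ J ^ (γ + 1)) * derivWithin u s x = E x * u x ^ γ
  gauss : ∀ x ∈ s, derivWithin E s x = J / u x - ρin

namespace IsSteadyFlowOn

variable {u E : ℝ → ℝ} {s : Set ℝ} {a b x : ℝ}

theorem hasDerivWithinAt_energy_zero (hflow : IsSteadyFlowOn γ ρin S₀ J u E s) (hγ : 0 < γ)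
    (hρin : ρin ≠ 0) (hS₀ : 0 < S₀) (hJ : 0 < J) (hx : x ∈ s) :
    HasDerivWithinAt (fun y => E y ^ 2 / 2 - Hfun γ ρin S₀ J (u y)) 0 s x := by
  have hu_pos := hflow.velocity_pos x hx
  have hE := (hflow.differentiableOn_field x hx).hasDerivWithinAt
  have hH := (hasDerivAt_Hfun hγ hρin hS₀ hJ hu_pos).comp_hasDerivWithinAt x
    (hflow.differentiableOn_velocity x hx).hasDerivWithinAt
  have h_momentum : (u x ^ (γ + 1) - usonic γ S₀ J ^ (γ + 1)) / u x ^ γ * (J / u x - ρin)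
      * derivWithin u s x = E x * (J / u x - ρin) := by
    rw [mul_right_comm, div_mul_eq_mul_div, hflow.momentum x hx,
      mul_div_cancel_right₀ _ (Real.rpow_pos_of_pos hu_pos γ).ne']
  refine (((hE.pow 2).div_const 2).sub hH).congr_deriv ?_
  rw [hflow.gauss x hx, h_momentum]
  ring

theorem mem_critTraj (hflow : IsSteadyFlowOn γ ρin S₀ J u E (Icc a b)) (hγ : 0 < γ)
    (hρin : ρin ≠ 0) (hS₀ : 0 < S₀) (hJ : 0 < J) (hab : a < b)
    (ha : (u a, E a) ∈ critTraj γ ρin S₀ J) (hx : x ∈ Icc a b) :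
    (u x, E x) ∈ critTraj γ ρin S₀ J := by
  have h_deriv y (hy : y ∈ Icc a b) := hflow.hasDerivWithinAt_energy_zero hγ hρin hS₀ hJ hy
  have h_const := constant_of_derivWithin_zero
    (fun y hy => (h_deriv y hy).differentiableWithinAt)
    (fun y hy => (h_deriv y (Ico_subset_Icc_self hy)).derivWithin
      (uniqueDiffOn_Icc hab y (Ico_subset_Icc_self hy))) x hx
  exact ⟨hflow.velocity_pos x hx, h_const.trans ha.2⟩

theorem sub_usonic_mul_field_nonneg (hflow : IsSteadyFlowOn γ ρin S₀ J u E s) (hγ : 0 < γ)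
    (hS₀ : 0 < S₀) (hJ : 0 < J) (hmono : MonotoneOn u s) (hx : x ∈ s) :
    0 ≤ (u x - usonic γ S₀ J) * E x := by
  have hu_pos := hflow.velocity_pos x hx
  have hpow_pos : 0 < u x ^ γ := Real.rpow_pos_of_pos hu_pos γ
  have h_accel : 0 ≤ derivWithin u s x := hmono.derivWithin_nonneg
  have h_momentum := hflow.momentum x hx
  rcases le_total (u x) (usonic γ S₀ J) with hle | hle
  · have hpow := Real.rpow_le_rpow hu_pos.le hle (by linarith : 0 ≤ γ + 1)
    have hE : E x * u x ^ γ ≤ 0 :=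
      h_momentum ▸ mul_nonpos_of_nonpos_of_nonneg (sub_nonpos.2 hpow) h_accel
    exact mul_nonneg_of_nonpos_of_nonpos (sub_nonpos.2 hle)
      (nonpos_of_mul_nonpos_left hE hpow_pos)
  · have hpow := Real.rpow_le_rpow (usonic_pos hγ hS₀ hJ).le hle (by linarith : 0 ≤ γ + 1)
    have hE : 0 ≤ E x * u x ^ γ := h_momentum ▸ mul_nonneg (sub_nonneg.2 hpow) h_accel
    exact mul_nonneg (sub_nonneg.2 hle) (nonneg_of_mul_nonneg_left hE hpow_pos)

theorem mem_critTrajAcc (hflow : IsSteadyFlowOn γ ρin S₀ J u E (Icc a b)) (hγ : 0 < γ)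
    (hρin : ρin ≠ 0) (hS₀ : 0 < S₀) (hJ : 0 < J) (hab : a < b)
    (hmono : MonotoneOn u (Icc a b)) (ha : (u a, E a) ∈ critTraj γ ρin S₀ J)
    (hx : x ∈ Icc a b) : (u x, E x) ∈ critTrajAcc γ ρin S₀ J :=
  ⟨hflow.mem_critTraj hγ hρin hS₀ hJ hab ha hx,
    hflow.sub_usonic_mul_field_nonneg hγ hS₀ hJ hmono hx⟩

end IsSteadyFlowOn

theorem stmt9_general {a b : ℝ} {n : ℕ∞} {u E φ : ℝ → ℝ} (hγ : 0 < γ) (hρin : ρin ≠ 0)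
    (hS₀ : 0 < S₀) (hJ : 0 < J) (hab : a < b)
    (hflow : IsSteadyFlowOn γ ρin S₀ J u E (Icc a b)) (hu : ContDiffOn ℝ n u (Icc a b))
    (hmono : MonotoneOn u (Icc a b)) (ha : (u a, E a) ∈ critTraj γ ρin S₀ J)
    (hφ : ∀ x ∈ Icc a b, HasDerivWithinAt φ (u x) (Icc a b) x) :
    ContDiffOn ℝ (n + 1) φ (Icc a b) ∧
    ∀ x ∈ Icc a b,
      (derivWithin φ (Icc a b) x ^ (γ + 1) - usonic γ S₀ J ^ (γ + 1))
        * derivWithin (derivWithin φ (Icc a b)) (Icc a b) x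
      - Real.sign (derivWithin φ (Icc a b) x - usonic γ S₀ J)
        * √(2 * Hfun γ ρin S₀ J (derivWithin φ (Icc a b) x))
        * derivWithin φ (Icc a b) x ^ γ = 0 := by
  have hs : UniqueDiffOn ℝ (Icc a b) := uniqueDiffOn_Icc hab
  have hφ' : EqOn (derivWithin φ (Icc a b)) u (Icc a b) :=
    fun x hx => (hφ x hx).derivWithin (hs x hx)
  refine ⟨contDiffOn_succ_of_hasDerivWithinAt hs hφ hu, fun x hx => ?_⟩
  have hE := sign_mul_sqrt_of_mem_critTrajAcc
    (hflow.mem_critTrajAcc hγ hρin hS₀ hJ hab hmono ha hx)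
  rw [derivWithin_congr hφ' (hφ' hx), hφ' hx, hE, hflow.momentum x hx, sub_self]

/-- The potential `φ̄(x₁) = ∫₀^{x₁} ū₁` of the accelerating smooth transonic solution is a
globally smooth solution of a second-order degenerate equation of Keldysh type. -/
theorem stmt9
    (γ ρin S₀ J u₀ E₀ lmax : ℝ)
    (hγ : 1 < γ) (hρin : 0 < ρin) (hS₀ : 0 < S₀) (hJ : 0 < J)
    (hζ₀ : 1 < uIn ρin J / usonic γ S₀ J)
    (hinit : (u₀, E₀) ∈ critTrajAcc γ ρin S₀ J)
    (hu₀ : 0 < u₀) (hu₀s : u₀ < usonic γ S₀ J)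
    (hlmax : 0 < lmax)
    (u E : ℝ → ℝ)
    (husm : ContDiffOn ℝ (⊤ : ℕ∞) u (Icc 0 lmax)) (hEsm : ContDiffOn ℝ (⊤ : ℕ∞) E (Icc 0 lmax))
    (hupos : ∀ x ∈ Icc (0:ℝ) lmax, 0 < u x)
    (hu0 : u 0 = u₀) (hE0 : E 0 = E₀)
    (hODE : ∀ x ∈ Icc (0:ℝ) lmax,
      (u x ^ (γ + 1) - usonic γ S₀ J ^ (γ + 1)) * derivWithin u (Icc 0 lmax) x
        = E x * u x ^ γ ∧
      derivWithin E (Icc 0 lmax) x = J / u x - ρin)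
    (hacc : ∀ x ∈ Ico (0:ℝ) lmax, 0 < derivWithin u (Icc 0 lmax) x)
    :
    ContDiffOn ℝ (⊤ : ℕ∞) (fun x => ∫ t in (0:ℝ)..x, u t) (Icc 0 lmax) ∧
    ∀ x ∈ Icc (0:ℝ) lmax,
      (derivWithin (fun y => ∫ t in (0:ℝ)..y, u t) (Icc 0 lmax) x ^ (γ + 1)
          - usonic γ S₀ J ^ (γ + 1))
        * derivWithin (fun y => derivWithin (fun z => ∫ t in (0:ℝ)..z, u t) (Icc 0 lmax) y)
            (Icc 0 lmax) x
      - Real.sign (derivWithin (fun y => ∫ t in (0:ℝ)..y, u t) (Icc 0 lmax) x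
            - usonic γ S₀ J)
        * Real.sqrt (2 * Hfun γ ρin S₀ J
            (derivWithin (fun y => ∫ t in (0:ℝ)..y, u t) (Icc 0 lmax) x))
        * derivWithin (fun y => ∫ t in (0:ℝ)..y, u t) (Icc 0 lmax) x ^ γ = 0 := by
  have hu : DifferentiableOn ℝ u (Icc 0 lmax) := husm.differentiableOn (by simp)
  exact stmt9_general (zero_lt_one.trans hγ) hρin.ne' hS₀ hJ hlmax
    ⟨hu, hEsm.differentiableOn (by simp), hupos, fun x hx => (hODE x hx).1,
      fun x hx => (hODE x hx).2⟩
    husm (monotoneOn_Icc_of_derivWithin_nonneg hu fun x hx => (hacc x (Ioo_subset_Ico_self hx)).le)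
    (by simpa only [hu0, hE0] using hinit.1)
    fun x hx => hasDerivWithinAt_integral_Icc husm.continuousOn hx
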